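/- arXiv:2401.07308 — 7 statements merged into one kernel-verified Lean document; each statement's English description precedes it below -/
import Mathlib

section
/- Let AN ⊑ AN' be acyclic nets (AN is a co-initial subnet of AN'). Then: (1) the places of AN are the disjoint union of the initial places of AN' and the postsets (taken in AN') of the transitions of AN, i.e., P_AN = P_AN'^init ⊎ post_AN'(T_AN); and (2) AN = AN' if and only if T_AN = T_AN'. -/
/-- A net: a triple of places, transitions, and a flow relation. -/
structure Net (α : Type*) where
  places : Set α
  transitions : Set α
  flow : α → α → Prop

namespace Net

variable {α : Type*}

/-- The set of direct predecessors (preset) of a node. -/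
def pre (N : Net α) (x : α) : Set α := {z | N.flow z x}

/-- The set of direct successors (postset) of a node. -/
def post (N : Net α) (x : α) : Set α := {z | N.flow x z}

/-- Preset of a set of nodes. -/
def preSet (N : Net α) (X : Set α) : Set α := ⋃ x ∈ X, N.pre x

/-- Postset of a set of nodes. -/
def postSet (N : Net α) (X : Set α) : Set α := ⋃ x ∈ X, N.post x

/-- Initial places: places with empty preset. -/
def initPlaces (N : Net α) : Set α := {p ∈ N.places | N.pre p = ∅}

/-- Final places: places with empty postset. -/
def finPlaces (N : Net α) : Set α := {p ∈ N.places | N.post p = ∅}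

/-- An acyclic net: places and transitions are disjoint finite sets, places nonempty,
the flow relation relates only places to transitions and vice versa, is acyclic, and
every transition has at least one pre-place and one post-place. -/
def IsAcyclicNet (N : Net α) : Prop :=
  N.places.Finite ∧ N.transitions.Finite ∧
  Disjoint N.places N.transitions ∧
  (∀ x y, N.flow x y →
    (x ∈ N.places ∧ y ∈ N.transitions) ∨ (x ∈ N.transitions ∧ y ∈ N.places)) ∧
  N.places.Nonempty ∧
  (∀ x, ¬ Relation.TransGen N.flow x x) ∧
  (∀ t ∈ N.transitions, (N.pre t).Nonempty ∧ (N.post t).Nonempty)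

/-- An occurrence net: an acyclic net with `|pre p| ≤ 1` and `|post p| ≤ 1` for each place. -/
def IsOccurrenceNet (N : Net α) : Prop :=
  IsAcyclicNet N ∧ ∀ p ∈ N.places, (N.pre p).Subsingleton ∧ (N.post p).Subsingleton

/-- A backward deterministic acyclic net: an acyclic net with `|pre p| ≤ 1` for each place. -/
def IsBDAN (N : Net α) : Prop :=
  IsAcyclicNet N ∧ ∀ p ∈ N.places, (N.pre p).Subsingleton

/-- `N` is a subnet of `M`: nonempty set of places included, transitions included,
flow is the restriction of that of `M`, and every transition of `N` retains its
full preset and postset from `M`. -/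
def IsSubnet (N M : Net α) : Prop :=
  N.places.Nonempty ∧ N.places ⊆ M.places ∧ N.transitions ⊆ M.transitions ∧
  (∀ x y, N.flow x y ↔ M.flow x y ∧
    ((x ∈ N.places ∧ y ∈ N.transitions) ∨ (x ∈ N.transitions ∧ y ∈ N.places))) ∧
  (∀ t ∈ N.transitions, N.pre t = M.pre t ∧ N.post t = M.post t)

/-- `N` is a co-initial subnet of `M` : a subnet with the same initial places. -/
def CoInitial (N M : Net α) : Prop := IsSubnet N M ∧ N.initPlaces = M.initPlaces

/-- A step: a nonempty set of transitions with pairwise disjoint presets. -/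
def IsStep (N : Net α) (U : Set α) : Prop :=
  U.Nonempty ∧ U ⊆ N.transitions ∧ ∀ t ∈ U, ∀ u ∈ U, t ≠ u → N.pre t ∩ N.pre u = ∅

/-- A step `U` is enabled at marking `M` if all its pre-places are in `M`. -/
def Enabled (N : Net α) (M U : Set α) : Prop := IsStep N U ∧ N.preSet U ⊆ M

/-- Executing an enabled step `U` at `M` yields `M' = (M ∪ post U) \ pre U`. -/
def StepTrans (N : Net α) (M U M' : Set α) : Prop :=
  Enabled N M U ∧ M' = (M ∪ N.postSet U) \ N.preSet U

/-- Step sequences from a marking to a marking. -/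
inductive StepSeqFrom (N : Net α) : Set α → List (Set α) → Set α → Prop
  | nil (M : Set α) : StepSeqFrom N M [] M
  | cons {M U M' σ M''} : StepTrans N M U M' → StepSeqFrom N M' σ M'' →
      StepSeqFrom N M (U :: σ) M''

/-- The initial marking: the set of initial places. -/
def initMarking (N : Net α) : Set α := N.initPlaces

/-- Step sequences executable from the initial marking. -/
def sseq (N : Net α) : Set (List (Set α)) := {σ | ∃ M, StepSeqFrom N N.initMarking σ M}

/-- Mixed step sequences: alternating steps and resulting markings from a marking. -/
inductive MixFrom (N : Net α) : Set α → List (Set α × Set α) → Prop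
  | nil (M : Set α) : MixFrom N M []
  | cons {M U M' l} : StepTrans N M U M' → MixFrom N M' l → MixFrom N M ((U, M') :: l)

/-- Mixed step sequences from the initial marking, represented as the initial marking
paired with the list of consecutive (step, marking) pairs. -/
def mixsseq (N : Net α) : Set (Set α × List (Set α × Set α)) :=
  {p | p.1 = N.initMarking ∧ MixFrom N p.1 p.2}

/-- Markings reachable from the initial marking. -/
def reach (N : Net α) : Set (Set α) := {M | ∃ σ, StepSeqFrom N N.initMarking σ M}

/-- Firing sequences: step sequences all of whose steps are singletons. -/
def fseq (N : Net α) : Set (List (Set α)) :=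
  {σ | σ ∈ N.sseq ∧ ∀ U ∈ σ, ∃ t, U = {t}}

/-- Maximal step sequences: no step can be appended. -/
def maxsseq (N : Net α) : Set (List (Set α)) :=
  {σ | σ ∈ N.sseq ∧ ¬ ∃ U, σ ++ [U] ∈ N.sseq}

/-- Maximal mixed step sequences: no step and marking can be appended. -/
def maxmixsseq (N : Net α) : Set (Set α × List (Set α × Set α)) :=
  {p | p ∈ N.mixsseq ∧ ¬ ∃ U M, (p.1, p.2 ++ [(U, M)]) ∈ N.mixsseq}

/-- Final reachable markings: markings reached by maximal step sequences. -/
def finreach (N : Net α) : Set (Set α) :=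
  {M | ∃ σ ∈ N.maxsseq, StepSeqFrom N N.initMarking σ M}

/-- A step sequence is well-formed if post-sets of distinct transitions in the same
step are disjoint, and post-sets of distinct steps are disjoint. -/
def WellFormedSeq (N : Net α) (σ : List (Set α)) : Prop :=
  (∀ U ∈ σ, ∀ t ∈ U, ∀ u ∈ U, t ≠ u → N.post t ∩ N.post u = ∅) ∧
  σ.Pairwise (fun U V => N.postSet U ∩ N.postSet V = ∅)

/-- The set of transitions occurring in a step sequence. -/
def transOf (σ : List (Set α)) : Set α := {t | ∃ U ∈ σ, t ∈ U}

/-- A net is well-formed if each transition occurs in at least one step sequence and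
all step sequences are well-formed. -/
def WellFormedNet (N : Net α) : Prop :=
  (∀ t ∈ N.transitions, ∃ σ ∈ N.sseq, t ∈ transOf σ) ∧
  (∀ σ ∈ N.sseq, N.WellFormedSeq σ)

/-- Scenarios of a net: occurrence nets that are co-initial subnets of it. -/
def scenarios (N : Net α) : Set (Net α) :=
  {S | IsOccurrenceNet S ∧ CoInitial S N}

/-- Maximal scenarios: scenarios not strictly included (co-initially) in another scenario. -/
def maxscenarios (N : Net α) : Set (Net α) :=
  {S | S ∈ N.scenarios ∧ ¬ ∃ S', S' ∈ N.scenarios ∧ S' ≠ S ∧ CoInitial S S'}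

/-- The scenario induced by a (well-formed) step sequence `σ`:
transitions are those occurring in `σ`, places are the initial places together with
the postsets of those transitions, and the flow is the restriction. -/
def inducedScenario (N : Net α) (σ : List (Set α)) : Net α where
  places := N.initMarking ∪ N.postSet (transOf σ)
  transitions := transOf σ
  flow := fun x y => N.flow x y ∧
    ((x ∈ N.initMarking ∪ N.postSet (transOf σ) ∧ y ∈ transOf σ) ∨
     (x ∈ transOf σ ∧ y ∈ N.initMarking ∪ N.postSet (transOf σ)))

end Net
/-- In an acyclic net, the places are the initial ones and the successors of transitions. -/
theorem places_eq_aux {α : Type*} (K : Net α) (hK : K.IsAcyclicNet) (p : α) :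
    p ∈ K.places ↔ p ∈ K.initPlaces ∨ ∃ t ∈ K.transitions, K.flow t p := by
  obtain ⟨-, -, hd, hf, -, -, -⟩ := hK
  constructor
  · intro hp
    by_cases he : K.pre p = ∅
    · exact Or.inl ⟨hp, he⟩
    · obtain ⟨x, hx⟩ := Set.nonempty_iff_ne_empty.mpr he
      rcases hf x p hx with h1 | h1
      · exact (Set.disjoint_left.mp hd hp h1.2).elim
      · exact Or.inr ⟨x, h1.1, hx⟩
  · rintro (hp | ⟨t, ht, hx⟩)
    · exact hp.1
    · rcases hf t p hx with h1 | h1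
      · exact (Set.disjoint_left.mp hd h1.1 ht).elim
      · exact h1.2

/-- For acyclic nets `AN ⊑ AN'`:
(1) `P_AN = P_AN'^init ⊎ post_AN'(T_AN)`; and (2) `AN = AN'` iff `T_AN = T_AN'`. -/
theorem stmt2 {α : Type*} (N N' : Net α) (hN : N.IsAcyclicNet) (hN' : N'.IsAcyclicNet)
    (h : Net.CoInitial N N') :
    (N.places = N'.initPlaces ∪ N'.postSet N.transitions ∧
      Disjoint N'.initPlaces (N'.postSet N.transitions)) ∧
    (N = N' ↔ N.transitions = N'.transitions) := by
  obtain ⟨⟨-, -, -, hfl, hpp⟩, hinit⟩ := h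
  have hpost : ∀ t ∈ N.transitions, ∀ p, N.flow t p ↔ N'.flow t p := fun t ht p =>
    Set.ext_iff.mp (hpp t ht).2 p
  have key : N.places = N'.initPlaces ∪ N'.postSet N.transitions := by
    ext p
    rw [places_eq_aux N hN p, hinit]
    simp only [Net.postSet, Net.post, Set.mem_union, Set.mem_iUnion, Set.mem_setOf_eq,
      exists_prop]
    refine or_congr Iff.rfl (exists_congr fun t => and_congr_right fun ht => hpost t ht p)
  refine ⟨⟨key, ?_⟩, ?_⟩
  · rw [Set.disjoint_left]
    intro p hp hq
    simp only [Net.postSet, Net.post, Set.mem_iUnion, Set.mem_setOf_eq, exists_prop] at hq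
    obtain ⟨t, -, hx⟩ := hq
    exact (Set.ext_iff.mp hp.2 t).mp hx
  · constructor
    · intro h
      rw [h]
    · intro hT
      have hP : N.places = N'.places := by
        ext p
        rw [places_eq_aux N hN p, places_eq_aux N' hN' p, hinit, ← hT]
        exact or_congr Iff.rfl (exists_congr fun t => and_congr_right fun ht => hpost t ht p)
      have hF : N.flow = N'.flow := by
        funext x y
        apply propext
        rw [hfl x y, hP, hT]
        exact ⟨fun h => h.1, fun h => ⟨h, hN'.2.2.2.1 x y h⟩⟩
      cases N
      cases N'
      simp only at hT hP hF
      subst hT hP hF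
      rfl
end

section
/- Let AN ⊑ AN' be acyclic nets (AN a co-initial subnet of AN'). Then the mixed step sequences, step sequences, reachable markings, and firing sequences of AN (from its initial marking) are all included in the corresponding sets for AN': f(AN) ⊆ f(AN') for f = mixsseq, sseq, reach, fseq. -/
theorem Net.StepTrans.mono {α : Type*} {N N' : Net α} (h : Net.CoInitial N N')
    {M U M' : Set α} (hs : N.StepTrans M U M') : N'.StepTrans M U M' := by
  obtain ⟨⟨_, _, hT, _, hpp⟩, _⟩ := h
  obtain ⟨⟨⟨hne, hU, hd⟩, hen⟩, hM⟩ := hs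
  have hpre : N.preSet U = N'.preSet U :=
    Set.iUnion₂_congr fun t ht => (hpp t (hU ht)).1
  have hpost : N.postSet U = N'.postSet U :=
    Set.iUnion₂_congr fun t ht => (hpp t (hU ht)).2
  refine ⟨⟨⟨hne, hU.trans hT, fun t ht u hu htu => ?_⟩, hpre ▸ hen⟩, ?_⟩
  · rw [← (hpp t (hU ht)).1, ← (hpp u (hU hu)).1]
    exact hd t ht u hu htu
  · rw [← hpre, ← hpost]
    exact hM

theorem Net.StepSeqFrom.mono {α : Type*} {N N' : Net α} (h : Net.CoInitial N N')
    {M M' : Set α} {σ : List (Set α)} (hs : N.StepSeqFrom M σ M') :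
    N'.StepSeqFrom M σ M' := by
  induction hs with
  | nil M => exact .nil M
  | cons h1 _ ih => exact .cons (h1.mono h) ih

theorem Net.MixFrom.mono {α : Type*} {N N' : Net α} (h : Net.CoInitial N N')
    {M : Set α} {l : List (Set α × Set α)} (hs : N.MixFrom M l) : N'.MixFrom M l := by
  induction hs with
  | nil M => exact .nil M
  | cons h1 _ ih => exact .cons (h1.mono h) ih

/-- For acyclic nets `AN ⊑ AN'`, `f(AN) ⊆ f(AN')` for
`f = mixsseq, sseq, reach, fseq`. -/
theorem stmt5 {α : Type*} (N N' : Net α) (hN : N.IsAcyclicNet) (hN' : N'.IsAcyclicNet)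
    (h : Net.CoInitial N N') :
    N.mixsseq ⊆ N'.mixsseq ∧ N.sseq ⊆ N'.sseq ∧ N.reach ⊆ N'.reach ∧ N.fseq ⊆ N'.fseq := by
  have hi : N.initMarking = N'.initMarking := h.2
  have hseq : N.sseq ⊆ N'.sseq := by
    rintro σ ⟨M, hM⟩
    exact ⟨M, hi ▸ hM.mono h⟩
  refine ⟨?_, hseq, ?_, ?_⟩
  · rintro p ⟨hp, hm⟩
    exact ⟨hp.trans hi, hm.mono h⟩
  · rintro M ⟨σ, hM⟩
    exact ⟨σ, hi ▸ hM.mono h⟩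
  · rintro σ ⟨hσ, hs⟩
    exact ⟨hseq hσ, hs⟩
end

section
/- Let σ = U_1…U_k be a well-formed step sequence of an acyclic net AN, with corresponding mixed step sequence M_0 U_1 M_1 … U_k M_k starting from the initial marking M_0 = P^init, and let T = U_1 ∪ … ∪ U_k. Then: (1) pre(U_i) ∩ post(U_i) = ∅ for every i; (2) pre(U_i) ∩ pre(U_j) = ∅ and U_i ∩ U_j = ∅ for all i < j; (3) M_k = (M_0 ∪ post(T)) \ pre(T); (4) any enumeration of the transitions of the steps, listing the elements of U_1 first, then U_2, etc., is a firing sequence of AN; (5) for all i < j < m, any step enabled at both M_i and M_m is enabled at M_j. -/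
namespace Net

variable {α : Type*}

lemma mem_preSet' {N : Net α} {U : Set α} {p : α} : p ∈ N.preSet U ↔ ∃ t ∈ U, p ∈ N.pre t := by
  simp [preSet]

lemma mem_postSet' {N : Net α} {U : Set α} {p : α} :
    p ∈ N.postSet U ↔ ∃ t ∈ U, p ∈ N.post t := by
  simp [postSet]

/-- A place never produced and present at some marking was present before. -/
lemma back_mem {N : Net α} {M : Set α} {l : List (Set α × Set α)} (h : MixFrom N M l) {p : α} :
    (∀ V ∈ l.map Prod.fst, p ∉ N.postSet V) →
    ∀ j m (hjm : j ≤ m) (hm : m < (M :: l.map Prod.snd).length),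
      p ∈ (M :: l.map Prod.snd)[m]'hm → p ∈ (M :: l.map Prod.snd)[j]'(by omega) := by
  induction h with
  | nil M =>
    intro _ j m hjm hm hp
    have h1 : m = 0 := by simpa using hm
    have h2 : j = 0 := by omega
    subst h1 h2
    exact hp
  | @cons M U M' l hst hmix ih =>
    intro hV j m hjm hm hp
    have hM : p ∈ M' → p ∈ M := by
      intro h
      rw [hst.2] at h
      rcases h.1 with h | h
      · exact h
      · exact absurd h (hV U (by simp))
    have hV' : ∀ V ∈ l.map Prod.fst, p ∉ N.postSet V :=
      fun V hVl => hV V (by rw [List.map_cons]; exact List.mem_cons_of_mem _ hVl)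
    cases m with
    | zero =>
      have h2 : j = 0 := by omega
      subst h2
      exact hp
    | succ m =>
      cases j with
      | zero =>
        exact hM (ih hV' 0 m (Nat.zero_le _) (by simpa using hm) (by simpa using hp))
      | succ j =>
        have := ih hV' j m (by omega) (by simpa using hm) (by simpa using hp)
        simpa using this

/-- A place never produced and consumed by some step was present. -/
lemma back_pre {N : Net α} {M : Set α} {l : List (Set α × Set α)} (h : MixFrom N M l) {p : α} :
    (∀ V ∈ l.map Prod.fst, p ∉ N.postSet V) →
    ∀ V ∈ l.map Prod.fst, p ∈ N.preSet V → p ∈ M := by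
  induction h with
  | nil M => intro _ V hV; simp at hV
  | @cons M U M' l hst hmix ih =>
    intro hV V hVl hp
    rw [List.map_cons, List.mem_cons] at hVl
    rcases hVl with rfl | hVl
    · exact hst.1.2 hp
    · have h := ih (fun V h => hV V (by rw [List.map_cons]; exact List.mem_cons_of_mem _ h)) V hVl hp
      rw [hst.2] at h
      rcases h.1 with h | h
      · exact h
      · exact absurd h (hV U (by simp))

lemma StepSeqFrom.append {N : Net α} {M M' M'' : Set α} {a b : List (Set α)}
    (h : StepSeqFrom N M a M') (h' : StepSeqFrom N M' b M'') : StepSeqFrom N M (a ++ b) M'' := by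
  induction h with
  | nil => exact h'
  | cons hst _ ih => exact StepSeqFrom.cons hst (ih h')

/-- Sequentialising one step. -/
lemma seq_step {N : Net α} (l : List α) : ∀ (M : Set α), l.Nodup → (∀ t ∈ l, t ∈ N.transitions) →
    (∀ t ∈ l, ∀ u ∈ l, t ≠ u → N.pre t ∩ N.pre u = ∅) →
    N.preSet {t | t ∈ l} ⊆ M → N.preSet {t | t ∈ l} ∩ N.postSet {t | t ∈ l} = ∅ →
    StepSeqFrom N M (l.map fun t => ({t} : Set α))
      ((M ∪ N.postSet {t | t ∈ l}) \ N.preSet {t | t ∈ l}) := by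
  induction l with
  | nil =>
    intro M _ _ _ _ _
    have : (M ∪ N.postSet {t | t ∈ ([] : List α)}) \ N.preSet {t | t ∈ ([] : List α)} = M := by
      ext p; simp [preSet, postSet]
    rw [this]
    exact StepSeqFrom.nil M
  | cons a l ih =>
    intro M hnd htr hpre hen hdis
    rw [List.nodup_cons] at hnd
    have hdis' : ∀ p, ∀ t ∈ a :: l, ∀ u ∈ a :: l, p ∈ N.pre t → p ∈ N.post u → False := by
      intro p t ht u hu h1 h2
      have : p ∈ N.preSet {t | t ∈ a :: l} ∩ N.postSet {t | t ∈ a :: l} :=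
        ⟨mem_preSet'.2 ⟨t, ht, h1⟩, mem_postSet'.2 ⟨u, hu, h2⟩⟩
      rw [hdis] at this
      exact this
    have hen' : ∀ p, ∀ t ∈ a :: l, p ∈ N.pre t → p ∈ M :=
      fun p t ht h => hen (mem_preSet'.2 ⟨t, ht, h⟩)
    have hdj : ∀ p, ∀ t ∈ l, p ∈ N.pre a → p ∈ N.pre t → False := by
      intro p t ht h1 h2
      have : p ∈ N.pre a ∩ N.pre t := ⟨h1, h2⟩
      rw [hpre a (by simp) t (by simp [ht]) (by rintro rfl; exact hnd.1 ht)] at this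
      exact this
    have key := ih ((M ∪ N.postSet {a}) \ N.preSet {a}) hnd.2 (fun t ht => htr t (by simp [ht]))
      (fun t ht u hu => hpre t (by simp [ht]) u (by simp [hu]))
      (by
        intro p hp
        obtain ⟨t, ht, h⟩ := mem_preSet'.1 hp
        refine ⟨Or.inl (hen' p t (List.mem_cons_of_mem _ ht) h), ?_⟩
        intro h'
        obtain ⟨u, hu, h''⟩ := mem_preSet'.1 h'
        rw [Set.mem_singleton_iff] at hu
        subst hu
        exact hdj p t ht h'' h)
      (by
        rw [Set.eq_empty_iff_forall_notMem]
        rintro p ⟨h1, h2⟩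
        obtain ⟨t, ht, h⟩ := mem_preSet'.1 h1
        obtain ⟨u, hu, h'⟩ := mem_postSet'.1 h2
        exact hdis' p t (List.mem_cons_of_mem _ ht) u (List.mem_cons_of_mem _ hu) h h')
    have heq : (((M ∪ N.postSet {a}) \ N.preSet {a}) ∪ N.postSet {t | t ∈ l}) \
        N.preSet {t | t ∈ l} =
        (M ∪ N.postSet {t | t ∈ a :: l}) \ N.preSet {t | t ∈ a :: l} := by
      ext p
      have := fun u hu => hdis' p a (by simp) u (List.mem_cons_of_mem _ hu)
      simp only [Set.mem_sdiff, Set.mem_union, mem_preSet', mem_postSet', Set.mem_singleton_iff,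
        Set.mem_ofPred_eq, List.mem_cons, exists_eq_left, or_and_right]
      grind
    rw [heq] at key
    rw [List.map_cons]
    refine StepSeqFrom.cons ⟨⟨⟨⟨a, rfl⟩, ?_, ?_⟩, ?_⟩, rfl⟩ key
    · rintro t rfl
      exact htr _ (by simp)
    · rintro t rfl u rfl h
      exact absurd rfl h
    · intro p hp
      obtain ⟨t, ht, h⟩ := mem_preSet'.1 hp
      rw [Set.mem_singleton_iff] at ht
      subst ht
      exact hen' p t (by simp) h

lemma main_aux {N : Net α} (hne : ∀ t ∈ N.transitions, (N.post t).Nonempty)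
    {M : Set α} {l : List (Set α × Set α)} (hmix : MixFrom N M l) :
    ∀ A : Set α, M ⊆ A →
    (∀ V ∈ l.map Prod.fst, ∀ p ∈ A, p ∉ N.postSet V) →
    (l.map Prod.fst).Pairwise (fun U V => N.postSet U ∩ N.postSet V = ∅) →
    (∀ U ∈ l.map Prod.fst, N.preSet U ∩ N.postSet U = ∅) ∧
    (l.map Prod.fst).Pairwise (fun U V => N.preSet U ∩ N.preSet V = ∅ ∧ U ∩ V = ∅) ∧
    ((M :: l.map Prod.snd).getLast (List.cons_ne_nil _ _) =
      (M ∪ N.postSet (transOf (l.map Prod.fst))) \ N.preSet (transOf (l.map Prod.fst))) ∧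
    (∀ ls : List (List α),
      List.Forall₂ (fun (l : List α) (U : Set α) => l.Nodup ∧ {t | t ∈ l} = U)
        ls (l.map Prod.fst) →
      ∃ M'', StepSeqFrom N M (ls.flatten.map fun t => ({t} : Set α)) M'') ∧
    (∀ i j m (hij : i < j) (hjm : j < m) (hm : m < (M :: l.map Prod.snd).length), ∀ p,
        p ∈ ((M :: l.map Prod.snd)[i]'(by omega)) →
        p ∈ ((M :: l.map Prod.snd)[m]'hm) →
        p ∈ ((M :: l.map Prod.snd)[j]'(by omega))) := by
  induction hmix with
  | nil M =>
    intro A _ _ _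
    refine ⟨by simp, by simp, ?_, ?_, ?_⟩
    · ext p; simp [transOf, preSet, postSet]
    · intro ls hls
      rw [List.map_nil, List.forall₂_nil_right_iff] at hls
      subst hls
      exact ⟨M, StepSeqFrom.nil M⟩
    · intro i j m hij hjm hm
      simp at hm
      omega
  | @cons M U M' l hst hmix ih =>
    intro A hMA hA hpw
    have hmixc : MixFrom N M ((U, M') :: l) := MixFrom.cons hst hmix
    have hback : ∀ p ∈ M, ∀ V ∈ ((U, M') :: l).map Prod.fst, p ∉ N.postSet V :=
      fun p hp V hV => hA V hV p (hMA hp)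
    rw [List.map_cons, List.pairwise_cons] at hpw
    simp only [List.map_cons, List.mem_cons, forall_eq_or_imp] at hA
    have hpp : ∀ V ∈ l.map Prod.fst, ∀ p ∈ N.postSet U, p ∉ N.postSet V := by
      intro V hV p h1 h2
      have : p ∈ N.postSet U ∩ N.postSet V := ⟨h1, h2⟩
      rw [hpw.1 V hV] at this
      exact this
    obtain ⟨ih1, ih2, ih3, ih4, ih5⟩ := ih (A ∪ N.postSet U)
      (by
        rw [hst.2]
        rintro p ⟨h | h, _⟩
        · exact Or.inl (hMA h)
        · exact Or.inr h)
      (by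
        rintro V hV p (h | h)
        · exact hA.2 V hV p h
        · exact hpp V hV p h) hpw.2
    have h1 : N.preSet U ∩ N.postSet U = ∅ := by
      rw [Set.eq_empty_iff_forall_notMem]
      rintro p ⟨h1, h2⟩
      exact hA.1 p (hMA (hst.1.2 h1)) h2
    refine ⟨?_, ?_, ?_, ?_, ?_⟩
    · simp only [List.map_cons, List.mem_cons, forall_eq_or_imp]
      exact ⟨h1, ih1⟩
    · rw [List.map_cons, List.pairwise_cons]
      refine ⟨fun V hV => ⟨?_, ?_⟩, ih2⟩
      · rw [Set.eq_empty_iff_forall_notMem]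
        rintro p ⟨hp1, hp2⟩
        have := back_pre hmix (fun W hW => hA.2 W hW p (hMA (hst.1.2 hp1))) V hV hp2
        rw [hst.2] at this
        exact this.2 hp1
      · rw [Set.eq_empty_iff_forall_notMem]
        rintro t ⟨ht1, ht2⟩
        obtain ⟨p, hp⟩ := hne t (hst.1.1.2.1 ht1)
        exact hpp V hV p (mem_postSet'.2 ⟨t, ht1, hp⟩) (mem_postSet'.2 ⟨t, ht2, hp⟩)
    · have e1 : N.postSet (transOf (((U, M') :: l).map Prod.fst)) =
          N.postSet U ∪ N.postSet (transOf (l.map Prod.fst)) := by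
        ext p
        simp only [mem_postSet', transOf, Set.mem_union, List.map_cons, List.mem_cons,
          exists_eq_left, Set.mem_ofPred_eq, or_and_right, exists_or]
      have e2 : N.preSet (transOf (((U, M') :: l).map Prod.fst)) =
          N.preSet U ∪ N.preSet (transOf (l.map Prod.fst)) := by
        ext p
        simp only [mem_preSet', transOf, Set.mem_union, List.map_cons, List.mem_cons,
          exists_eq_left, Set.mem_ofPred_eq, or_and_right, exists_or]
      have e3 : ∀ p ∈ N.preSet U, p ∉ N.postSet (transOf (l.map Prod.fst)) := by
        intro p hp h
        obtain ⟨t, ⟨V, hV, ht⟩, h⟩ := mem_postSet'.1 h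
        exact hA.2 V hV p (hMA (hst.1.2 hp)) (mem_postSet'.2 ⟨t, ht, h⟩)
      have e4 : (M :: ((U, M') :: l).map Prod.snd).getLast (List.cons_ne_nil _ _) =
          (M' :: l.map Prod.snd).getLast (List.cons_ne_nil _ _) := by
        simp
      rw [e4, ih3, e1, e2, hst.2]
      ext p
      have := e3 p
      simp only [Set.mem_sdiff, Set.mem_union]
      tauto
    · intro ls hls
      rw [List.map_cons, List.forall₂_cons_right_iff] at hls
      obtain ⟨a, ls', ⟨hnd, rfl⟩, hls', rfl⟩ := hls
      obtain ⟨M'', hM''⟩ := ih4 ls' hls'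
      refine ⟨M'', ?_⟩
      rw [List.flatten_cons, List.map_append]
      refine StepSeqFrom.append ?_ hM''
      rw [hst.2]
      exact seq_step a M hnd hst.1.1.2.1 hst.1.1.2.2 hst.1.2 h1
    · intro i j m hij hjm hm p hi hp
      cases i with
      | zero =>
        exact back_mem hmixc (hback p hi) j m hjm.le hm hp
      | succ i =>
        obtain ⟨j, rfl⟩ : ∃ j', j = j' + 1 := ⟨j - 1, by omega⟩
        obtain ⟨m, rfl⟩ : ∃ m', m = m' + 1 := ⟨m - 1, by omega⟩
        have := ih5 i j m (by omega) (by omega) (by simpa using hm) p (by simpa using hi)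
          (by simpa using hp)
        simpa using this

end Net

/-- Properties of a well-formed step sequence `σ = U_1…U_k` of an acyclic
net, with corresponding mixed step sequence `M_0 U_1 M_1 … U_k M_k` from `M_0 = P^init`. -/
theorem stmt7 {α : Type*} (N : Net α) (hAN : N.IsAcyclicNet)
    (mseq : List (Set α × Set α))
    (hmix : Net.MixFrom N N.initMarking mseq)
    (hwf : N.WellFormedSeq (mseq.map Prod.fst)) :
    -- (1)
    (∀ U ∈ mseq.map Prod.fst, N.preSet U ∩ N.postSet U = ∅) ∧
    -- (2)
    (mseq.map Prod.fst).Pairwise (fun U V => N.preSet U ∩ N.preSet V = ∅ ∧ U ∩ V = ∅) ∧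
    -- (3)
    ((N.initMarking :: mseq.map Prod.snd).getLast (List.cons_ne_nil _ _) =
      (N.initMarking ∪ N.postSet (Net.transOf (mseq.map Prod.fst))) \
        N.preSet (Net.transOf (mseq.map Prod.fst))) ∧
    -- (4)
    (∀ ls : List (List α),
      List.Forall₂ (fun (l : List α) (U : Set α) => l.Nodup ∧ {t | t ∈ l} = U)
        ls (mseq.map Prod.fst) →
      (ls.flatten.map fun t => ({t} : Set α)) ∈ N.fseq) ∧
    -- (5)
    (∀ i j m (hij : i < j) (hjm : j < m)
        (hm : m < (N.initMarking :: mseq.map Prod.snd).length),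
      ∀ U, Net.IsStep N U →
        N.preSet U ⊆ ((N.initMarking :: mseq.map Prod.snd)[i]'(by omega)) →
        N.preSet U ⊆ ((N.initMarking :: mseq.map Prod.snd)[m]'hm) →
        N.preSet U ⊆ ((N.initMarking :: mseq.map Prod.snd)[j]'(by omega))) := by
  obtain ⟨h1, h2, h3, h4, h5⟩ := Net.main_aux (fun t ht => (hAN.2.2.2.2.2.2 t ht).2) hmix
    N.initMarking subset_rfl
    (by
      intro V _ p hp h
      obtain ⟨t, _, ht⟩ := Net.mem_postSet'.1 h
      have : t ∈ N.pre p := ht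
      rw [hp.2] at this
      exact this) hwf.2
  refine ⟨h1, h2, h3, fun ls hls => ⟨h4 ls hls, ?_⟩, ?_⟩
  · intro U hU
    obtain ⟨t, _, rfl⟩ := List.mem_map.1 hU
    exact ⟨t, rfl⟩
  · intro i j m hij hjm hm U _ hi hm' p hp
    exact h5 i j m hij hjm hm p (hi hp) (hm' hp)
end

section
/- An acyclic net AN is well-formed if and only if each transition of AN occurs in at least one firing sequence and all firing sequences of AN are well-formed. -/
namespace Net

theorem stepSeqFrom_append {α : Type*} {N : Net α} {M M' M'' : Set α} {σ τ : List (Set α)}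
    (h1 : StepSeqFrom N M σ M') (h2 : StepSeqFrom N M' τ M'') :
    StepSeqFrom N M (σ ++ τ) M'' := by
  induction h1 with
  | nil M => exact h2
  | cons hs _ ih => exact StepSeqFrom.cons hs (ih h2)

/-- Executing the transitions of a step one by one yields at least the marking
obtained by executing the step. -/
theorem exists_firing {α : Type*} (N : Net α) (l : List α) :
    ∀ M : Set α, (∀ t ∈ l, t ∈ N.transitions) →
      l.Pairwise (fun t u => N.pre t ∩ N.pre u = ∅) → (∀ t ∈ l, N.pre t ⊆ M) →
      ∃ M', StepSeqFrom N M (l.map (fun t => ({t} : Set α))) M' ∧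
        ∀ p, (p ∈ M ∨ ∃ t ∈ l, p ∈ N.post t) → (∀ t ∈ l, p ∉ N.pre t) → p ∈ M' := by
  induction l with
  | nil =>
    intro M _ _ _
    refine ⟨M, StepSeqFrom.nil M, ?_⟩
    rintro p (hp | ⟨t, ht, _⟩) _
    · exact hp
    · simp at ht
  | cons a l ih =>
    intro M hT hP hE
    rw [List.pairwise_cons] at hP
    obtain ⟨M', hM', hsub⟩ := ih ((M ∪ N.postSet {a}) \ N.preSet {a})
      (fun t ht => hT t (List.mem_cons_of_mem _ ht)) hP.2 (by
        intro t ht p hp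
        refine ⟨Or.inl (hE t (List.mem_cons_of_mem _ ht) hp), fun hpa => ?_⟩
        have h2 : p ∈ N.pre a := by simpa [preSet] using hpa
        have h3 : p ∈ N.pre a ∩ N.pre t := ⟨h2, hp⟩
        rw [hP.1 t ht] at h3
        exact h3)
    refine ⟨M', StepSeqFrom.cons ⟨⟨⟨⟨a, rfl⟩, ?_, ?_⟩, ?_⟩, rfl⟩ hM', ?_⟩
    · rintro x rfl
      exact hT _ List.mem_cons_self
    · rintro t rfl u rfl hne
      exact absurd rfl hne
    · simpa [preSet] using hE a List.mem_cons_self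
    · intro p hp hn
      have hna : p ∉ N.pre a := hn a List.mem_cons_self
      refine hsub p ?_ (fun t ht => hn t (List.mem_cons_of_mem _ ht))
      rcases hp with hp | ⟨t, ht, hpt⟩
      · left
        exact ⟨Or.inl hp, by simpa [preSet] using hna⟩
      · rcases List.mem_cons.1 ht with rfl | ht
        · left
          exact ⟨Or.inr (by simpa [postSet] using hpt), by simpa [preSet] using hna⟩
        · exact Or.inr ⟨t, ht, hpt⟩

theorem exists_enum {α : Type*} : ∃ f : Set α → List α,
    ∀ U : Set α, U.Finite → (f U).Nodup ∧ ∀ t, t ∈ f U ↔ t ∈ U := by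
  classical
  refine ⟨fun U => if h : U.Finite then h.toFinset.toList else [], fun U hU => ?_⟩
  simp only [dif_pos hU]
  exact ⟨Finset.nodup_toList _, fun t => by simp⟩

theorem exists_linearization {α : Type*} {N : Net α} (hfin : N.transitions.Finite)
    (f : Set α → List α)
    (hf : ∀ U : Set α, U.Finite → (f U).Nodup ∧ ∀ t, t ∈ f U ↔ t ∈ U)
    {M M₁ : Set α} {σ : List (Set α)} (h : StepSeqFrom N M σ M₁) :
    (∀ U ∈ σ, U.Finite) ∧ ∀ M₀, M ⊆ M₀ →
      ∃ M', StepSeqFrom N M₀ ((σ.flatMap f).map (fun t => ({t} : Set α))) M' := by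
  induction h with
  | nil M => exact ⟨by simp, fun M₀ _ => ⟨M₀, StepSeqFrom.nil _⟩⟩
  | @cons M U M' σ M'' hs _ ih =>
    obtain ⟨⟨⟨hne, hUT, hdis⟩, hen⟩, rfl⟩ := hs
    have hUf : U.Finite := hfin.subset hUT
    obtain ⟨hnd, hmem⟩ := hf U hUf
    refine ⟨?_, fun M₀ hM₀ => ?_⟩
    · intro V hV
      rcases List.mem_cons.1 hV with rfl | hV
      · exact hUf
      · exact ih.1 V hV
    · obtain ⟨K, hK, hKsub⟩ := exists_firing N (f U) M₀
        (fun t ht => hUT ((hmem t).1 ht))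
        (hnd.imp_of_mem (fun {a b} ha hb hab =>
          hdis a ((hmem a).1 ha) b ((hmem b).1 hb) hab))
        (fun t ht p hp => hM₀ (hen (by
          simp only [preSet, Set.mem_iUnion]
          exact ⟨t, (hmem t).1 ht, hp⟩)))
      obtain ⟨L, hL⟩ := ih.2 K (by
        rintro p ⟨hp, hpn⟩
        simp only [preSet, postSet, Set.mem_iUnion, Set.mem_union, not_exists] at hp hpn
        refine hKsub p ?_ (fun t ht => hpn t ((hmem t).1 ht))
        rcases hp with hp | ⟨t, ht, hpt⟩
        · exact Or.inl (hM₀ hp)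
        · exact Or.inr ⟨t, (hmem t).2 ht, hpt⟩)
      refine ⟨L, ?_⟩
      rw [List.flatMap_cons, List.map_append]
      exact stepSeqFrom_append hK hL

end Net

/-- An acyclic net is well-formed iff each transition occurs in at least
one firing sequence and all firing sequences are well-formed. -/
theorem stmt8 {α : Type*} (N : Net α) (h : N.IsAcyclicNet) :
    N.WellFormedNet ↔
      ((∀ t ∈ N.transitions, ∃ σ ∈ N.fseq, t ∈ Net.transOf σ) ∧
       (∀ σ ∈ N.fseq, N.WellFormedSeq σ)) := by
  obtain ⟨f, hf⟩ := Net.exists_enum (α := α)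
  have key : ∀ σ ∈ N.sseq, (∀ U ∈ σ, U.Finite) ∧
      (σ.flatMap f).map (fun t => ({t} : Set α)) ∈ N.fseq := by
    rintro σ ⟨M, hM⟩
    obtain ⟨h1, h2⟩ := Net.exists_linearization h.2.1 f hf hM
    refine ⟨h1, h2 _ subset_rfl, fun U hU => ?_⟩
    obtain ⟨t, _, rfl⟩ := List.mem_map.1 hU
    exact ⟨t, rfl⟩
  constructor
  · rintro ⟨h1, h2⟩
    refine ⟨fun t ht => ?_, fun σ hσ => h2 σ hσ.1⟩
    obtain ⟨σ, hσ, U, hU, htU⟩ := h1 t ht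
    obtain ⟨hfin, hk⟩ := key σ hσ
    refine ⟨_, hk, {t}, List.mem_map.2 ⟨t, List.mem_flatMap.2 ⟨U, hU, ?_⟩, rfl⟩, rfl⟩
    exact ((hf U (hfin U hU)).2 t).2 htU
  · rintro ⟨h1, h2⟩
    refine ⟨fun t ht => ?_, fun σ hσ => ?_⟩
    · obtain ⟨σ, hσ, htσ⟩ := h1 t ht
      exact ⟨σ, hσ.1, htσ⟩
    · obtain ⟨hfin, hk⟩ := key σ hσ
      have hw := (h2 _ hk).2
      rw [List.pairwise_map, List.pairwise_flatMap] at hw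
      have hp : ∀ t, N.postSet {t} = N.post t := fun t => by simp [Net.postSet]
      simp only [hp] at hw
      refine ⟨fun U hU t ht u hu hne => ?_, ?_⟩
      · have hm := (hf U (hfin U hU)).2
        haveI : Std.Symm (fun a b => N.post a ∩ N.post b = ∅) :=
          ⟨fun a b hab => by rwa [Set.inter_comm]⟩
        exact (hw.1 U hU).forall ((hm t).2 ht) ((hm u).2 hu) hne
      · refine hw.2.imp_of_mem (fun {U V} hU hV hUV => ?_)
        ext p
        simp only [Net.postSet, Set.mem_inter_iff, Set.mem_iUnion, Set.mem_empty_iff_false,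
          iff_false]
        rintro ⟨⟨t, ht, hpt⟩, u, hu, hpu⟩
        have h3 := hUV t (((hf U (hfin U hU)).2 t).2 ht) u (((hf V (hfin V hV)).2 u).2 hu)
        have h4 : p ∈ N.post t ∩ N.post u := ⟨hpt, hpu⟩
        rw [h3] at h4
        exact h4
end

section
/- All step sequences of a backward deterministic acyclic net are well-formed. -/
/-- Along a step sequence no transition fires twice: `F` is the set of already fired
transitions, and the hypotheses are the invariants relating it to the current marking. -/
theorem stmt9_aux {α : Type*} (N : Net α)
    (hne : ∀ t ∈ N.transitions, (N.pre t).Nonempty)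
    (huniq : ∀ p u v, u ∈ N.transitions → N.flow u p → N.flow v p → u = v)
    {M : Set α} {σ : List (Set α)} {M'' : Set α} (hs : N.StepSeqFrom M σ M'') :
    ∀ F : Set α,
      (∀ t ∈ F, ∀ p, N.flow p t → p ∉ M) →
      (∀ p ∈ M, ∀ u, N.flow u p → u ∈ F) →
      (∀ t ∈ F, ∀ p, N.flow p t → ∀ u, N.flow u p → u ∈ F) →
      (∀ U ∈ σ, U ⊆ N.transitions ∧ ∀ t ∈ U, t ∉ F) ∧
        σ.Pairwise (fun U V => ∀ t ∈ V, t ∉ U) := by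
  induction hs with
  | nil M => intro F _ _ _; simp
  | @cons M U M' σ M'' hst _ ih =>
    intro F hA hB hC
    obtain ⟨⟨⟨_, hUT, _⟩, hen⟩, rfl⟩ := hst
    have hpre : ∀ t ∈ U, ∀ p, N.flow p t → p ∈ M := fun t ht p hp =>
      hen (Set.mem_biUnion ht hp)
    have hUF : ∀ t ∈ U, t ∉ F := by
      intro t ht htF
      obtain ⟨p, hp⟩ := hne t (hUT ht)
      exact hA t htF p hp (hpre t ht p hp)
    have key := ih (F ∪ U) ?_ ?_ ?_
    · obtain ⟨h1, h2⟩ := key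
      refine ⟨?_, List.pairwise_cons.2 ⟨?_, h2⟩⟩
      · intro V hV
        rcases List.mem_cons.1 hV with rfl | hV
        · exact ⟨hUT, hUF⟩
        · exact ⟨(h1 V hV).1, fun t ht hF => (h1 V hV).2 t ht (Or.inl hF)⟩
      · intro V hV t ht hU
        exact (h1 V hV).2 t ht (Or.inr hU)
    · rintro t (ht | ht) p hp ⟨hpM, hpn⟩
      · rcases hpM with hpM | hpM
        · exact hA t ht p hp hpM
        · obtain ⟨u, hu, hup⟩ := Set.mem_iUnion₂.1 hpM
          exact hUF u hu (hC t ht p hp u hup)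
      · exact hpn (Set.mem_biUnion ht hp)
    · rintro p ⟨hpM | hpM, _⟩ v hv
      · exact Or.inl (hB p hpM v hv)
      · obtain ⟨u, hu, hup⟩ := Set.mem_iUnion₂.1 hpM
        exact Or.inr (huniq p u v (hUT hu) hup hv ▸ hu)
    · rintro t (ht | ht) p hp u hu
      · exact Or.inl (hC t ht p hp u hu)
      · exact Or.inl (hB p (hpre t ht p hp) u hu)

/-- All step sequences of a backward deterministic acyclic net are
well-formed. -/
theorem stmt9 {α : Type*} (N : Net α) (h : N.IsBDAN) :
    ∀ σ ∈ N.sseq, N.WellFormedSeq σ := by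
  obtain ⟨⟨_, _, hdisj, hflow, _, _, hne⟩, hsub⟩ := h
  have huniq : ∀ p u v, u ∈ N.transitions → N.flow u p → N.flow v p → u = v := by
    intro p u v hu hup hvp
    have hp : p ∈ N.places := by
      rcases hflow u p hup with ⟨hu', _⟩ | ⟨_, hp⟩
      · exact (Set.disjoint_left.1 hdisj hu' hu).elim
      · exact hp
    exact hsub p hp hup hvp
  rintro σ ⟨M, hs⟩
  obtain ⟨h1, h2⟩ := stmt9_aux N (fun t ht => (hne t ht).1) huniq hs ∅
    (by simp)
    (fun p hp u hu => by
      have : u ∈ N.pre p := hu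
      rw [hp.2] at this
      exact this)
    (by simp)
  refine ⟨?_, h2.imp_of_mem ?_⟩
  · intro U hU t ht u hu htu
    refine Set.eq_empty_iff_forall_notMem.2 ?_
    rintro p ⟨hp, hq⟩
    exact htu (huniq p t u ((h1 U hU).1 ht) hp hq)
  · intro U V hU hV hUV
    refine Set.eq_empty_iff_forall_notMem.2 ?_
    rintro p ⟨hp, hq⟩
    obtain ⟨t, ht, htp⟩ := Set.mem_iUnion₂.1 hp
    obtain ⟨u, hu, hup⟩ := Set.mem_iUnion₂.1 hq
    have := huniq p t u ((h1 U hU).1 ht) htp hup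
    subst this
    exact hUV t hu ht
end

section
/- The class of occurrence nets is a proper subclass of the class of well-formed acyclic nets, which in turn is a proper subclass of the class of acyclic nets: ON ⊂ WFAN ⊂ AN. -/
namespace Net

variable {α : Type*}

/-- Invariant-based well-formedness for backward deterministic nets. -/
theorem wf_aux (N : Net α) (hN : N.IsBDAN) {M : Set α} {σ : List (Set α)} {M' : Set α}
    (hs : StepSeqFrom N M σ M') : ∀ H : Set α,
    (∀ p ∈ M, ∀ h ∈ H, ¬ N.flow p h) →
    (∀ h ∈ H, ∀ p, N.flow p h → ∀ t, N.flow t p → t ∈ H) →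
    (∀ p ∈ M, ∀ t, N.flow t p → t ∈ H) →
    N.WellFormedSeq σ ∧ ∀ U ∈ σ, ∀ t ∈ U, t ∈ N.transitions ∧ t ∉ H := by
  obtain ⟨⟨_, _, hdis, hflow, _, _, hne⟩, hbd⟩ := hN
  have hpl : ∀ t ∈ N.transitions, ∀ p, N.flow t p → p ∈ N.places := by
    intro t ht p hp
    rcases hflow t p hp with h | h
    · exact absurd ht (Set.disjoint_left.mp hdis h.1)
    · exact h.2
  induction hs with
  | nil M => intro H _ _ _; simp [WellFormedSeq]
  | @cons M U M1 σ M2 hst hrest ih =>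
    intro H ha hb hc
    obtain ⟨⟨⟨_, hUT, _⟩, hen⟩, rfl⟩ := hst
    have hpre : ∀ t ∈ U, ∀ p, N.flow p t → p ∈ M := by
      intro t ht p hp
      exact hen (Set.mem_biUnion ht hp)
    have hUH : ∀ t ∈ U, t ∉ H := by
      intro t ht htH
      obtain ⟨p, hp⟩ := (hne t (hUT ht)).1
      exact ha p (hpre t ht p hp) t htH hp
    have key := ih (H ∪ U) ?_ ?_ ?_
    · obtain ⟨⟨w1, w2⟩, w3⟩ := key
      refine ⟨⟨?_, ?_⟩, ?_⟩
      · intro V hV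
        rcases List.mem_cons.mp hV with rfl | hV
        · intro t ht u hu htu
          rw [Set.eq_empty_iff_forall_notMem]
          rintro p ⟨hp1, hp2⟩
          exact htu (hbd p (hpl t (hUT ht) p hp1) hp1 hp2)
        · exact w1 V hV
      · refine List.pairwise_cons.mpr ⟨?_, w2⟩
        intro V hV
        rw [Set.eq_empty_iff_forall_notMem]
        rintro p ⟨hp1, hp2⟩
        obtain ⟨t, ht, htp⟩ := Set.mem_iUnion₂.mp hp1
        obtain ⟨u, hu, hup⟩ := Set.mem_iUnion₂.mp hp2
        have : t = u := hbd p (hpl t (hUT ht) p htp) htp hup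
        subst this
        exact (w3 V hV t hu).2 (Or.inr ht)
      · intro V hV t ht
        rcases List.mem_cons.mp hV with rfl | hV
        · exact ⟨hUT ht, hUH t ht⟩
        · exact ⟨(w3 V hV t ht).1, fun h => (w3 V hV t ht).2 (Or.inl h)⟩
    · rintro p ⟨hp, hp'⟩ h hh hph
      rcases hh with hh | hh
      · rcases hp with hp | hp
        · exact ha p hp h hh hph
        · obtain ⟨t, ht, htp⟩ := Set.mem_iUnion₂.mp hp
          exact hUH t ht (hb h hh p hph t htp)
      · exact hp' (Set.mem_biUnion hh hph)
    · rintro h (hh | hh) p hp t ht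
      · exact Or.inl (hb h hh p hp t ht)
      · exact Or.inl (hc p (hpre h hh p hp) t ht)
    · rintro p ⟨hp | hp, _⟩ t ht
      · exact Or.inl (hc p hp t ht)
      · obtain ⟨u, hu, hup⟩ := Set.mem_iUnion₂.mp hp
        have : t = u := hbd p (hpl u (hUT hu) p hup) ht hup
        subst this
        exact Or.inr hu

theorem wf_of_bdan (N : Net α) (hN : N.IsBDAN) : ∀ σ ∈ N.sseq, N.WellFormedSeq σ := by
  rintro σ ⟨M, hM⟩
  refine (wf_aux N hN hM ∅ (by simp) (by simp) ?_).1
  rintro p ⟨_, hp⟩ t ht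
  have : t ∈ N.pre p := ht
  rw [hp] at this
  exact this

theorem occurs_aux (N : Net α) (hN : N.IsOccurrenceNet) (n : ℕ) : ∀ H M : Set α,
    (N.transitions \ H).ncard = n →
    (∀ p ∈ N.places, (∀ t, N.flow t p → t ∈ H) → (∀ t, N.flow p t → t ∉ H) → p ∈ M) →
    ∀ t ∈ N.transitions \ H, ∃ σ M', StepSeqFrom N M σ M' ∧ t ∈ transOf σ := by
  obtain ⟨⟨_, hfin, hdis, hflow, _, hac, hne⟩, hdet⟩ := hN
  induction n with
  | zero =>
    intro H M hn _ t ht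
    rw [Set.ncard_eq_zero (hfin.diff)] at hn
    rw [hn] at ht
    exact ht.elim
  | succ n ih =>
    intro H M hn hM t ht
    haveI : IsStrictOrder α (Relation.TransGen N.flow) :=
      { irrefl := hac, trans := fun _ _ _ => Relation.TransGen.trans }
    have hwf : (N.transitions \ H).WellFoundedOn (Relation.TransGen N.flow) :=
      (hfin.diff (t := H)).wellFoundedOn
    obtain ⟨⟨s, hs⟩, -, hmin⟩ := WellFounded.has_min hwf Set.univ ⟨⟨t, ht⟩, trivial⟩
    have hpreM : ∀ p, N.flow p s → p ∈ M := by
      intro p hp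
      have hpP : p ∈ N.places := by
        rcases hflow p s hp with h | h
        · exact h.1
        · exact absurd hs.1 (Set.disjoint_left.mp hdis h.2)
      apply hM p hpP
      · intro u hu
        by_contra huH
        have huT : u ∈ N.transitions := by
          rcases hflow u p hu with h | h
          · exact absurd h.2 (Set.disjoint_left.mp hdis hpP)
          · exact h.1
        exact hmin ⟨u, huT, huH⟩ trivial ((Relation.TransGen.single hu).tail hp)
      · intro u hu
        have : u = s := (hdet p hpP).2 hu hp
        subst this
        exact hs.2
    have hst : StepTrans N M {s} ((M ∪ N.postSet {s}) \ N.preSet {s}) := by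
      refine ⟨⟨⟨⟨s, rfl⟩, by simpa using hs.1, ?_⟩, ?_⟩, rfl⟩
      · rintro a rfl b rfl h
        exact absurd rfl h
      · intro p hp
        simp only [preSet, Set.mem_singleton_iff, Set.iUnion_iUnion_eq_left] at hp
        exact hpreM p hp
    by_cases hts : t = s
    · subst hts
      exact ⟨[{t}], _, .cons hst (.nil _), {t}, by simp, rfl⟩
    · have hcard : (N.transitions \ (H ∪ {s})).ncard = n := by
        have : N.transitions \ (H ∪ {s}) = (N.transitions \ H) \ {s} := by
          ext x
          simp only [Set.mem_sdiff, Set.mem_union]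
          tauto
        rw [this, Set.ncard_diff_singleton_of_mem hs, hn]
        rfl
      have hM' : ∀ p ∈ N.places, (∀ t, N.flow t p → t ∈ H ∪ {s}) →
          (∀ t, N.flow p t → t ∉ H ∪ {s}) → p ∈ (M ∪ N.postSet {s}) \ N.preSet {s} := by
        intro p hp h1 h2
        simp only [preSet, postSet, Set.mem_singleton_iff, Set.iUnion_iUnion_eq_left]
        refine ⟨?_, fun h => h2 s h (Or.inr rfl)⟩
        by_cases hsp : N.flow s p
        · exact Or.inr hsp
        · refine Or.inl (hM p hp ?_ fun u hu hh => h2 u hu (Or.inl hh))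
          intro u hu
          rcases h1 u hu with h | h
          · exact h
          · cases h
            exact absurd hu hsp
      have htH : t ∈ N.transitions \ (H ∪ {s}) := by
        refine ⟨ht.1, ?_⟩
        rintro (h | h)
        · exact ht.2 h
        · exact hts h
      obtain ⟨σ, M', h1, U, hU, htU⟩ := ih (H ∪ {s}) _ hcard hM' t htH
      exact ⟨{s} :: σ, M', .cons hst h1, U, List.mem_cons_of_mem _ hU, htU⟩

theorem wf_of_occ (N : Net α) (hN : N.IsOccurrenceNet) : N.WellFormedNet := by
  refine ⟨?_, wf_of_bdan N ⟨hN.1, fun p hp => (hN.2 p hp).1⟩⟩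
  intro t ht
  obtain ⟨σ, M, h1, h2⟩ := occurs_aux N hN _ ∅ N.initMarking rfl (by
    intro p hp h1 _
    exact ⟨hp, Set.eq_empty_iff_forall_notMem.mpr h1⟩) t ⟨ht, by simp⟩
  exact ⟨σ, ⟨M, h1⟩, h2⟩

/-- Forward conflict: place 0 feeds both 1 and 2. -/
def exA : Net ℕ where
  places := {0, 3, 4}
  transitions := {1, 2}
  flow x y := (x = 0 ∧ y = 1) ∨ (x = 0 ∧ y = 2) ∨ (x = 1 ∧ y = 3) ∨ (x = 2 ∧ y = 4)

/-- Backward conflict: place 4 is fed by both 2 and 3. -/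
def exB : Net ℕ where
  places := {0, 1, 4}
  transitions := {2, 3}
  flow x y := (x = 0 ∧ y = 2) ∨ (x = 1 ∧ y = 3) ∨ (x = 2 ∧ y = 4) ∨ (x = 3 ∧ y = 4)

theorem acyclic_of_lt (N : Net ℕ) (h : ∀ x y, N.flow x y → x < y) (x : ℕ) :
    ¬ Relation.TransGen N.flow x x := by
  have : ∀ y, Relation.TransGen N.flow x y → x < y := by
    intro y hy
    induction hy with
    | single h1 => exact h _ _ h1
    | tail _ h1 ih => exact ih.trans (h _ _ h1)
  exact fun hx => lt_irrefl _ (this x hx)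

theorem exA_acyclic : exA.IsAcyclicNet := by
  refine ⟨by simp [exA], by simp [exA], by simp [exA], ?_, ⟨0, by simp [exA]⟩,
    acyclic_of_lt _ ?_, ?_⟩
  · intro x y h
    simp only [exA, Set.mem_insert_iff, Set.mem_singleton_iff] at *
    omega
  · intro x y h
    simp only [exA] at h
    omega
  · intro t ht
    rcases ht with rfl | rfl
    · exact ⟨⟨0, by simp [exA, pre]⟩, ⟨3, by simp [exA, post]⟩⟩
    · exact ⟨⟨0, by simp [exA, pre]⟩, ⟨4, by simp [exA, post]⟩⟩

theorem exB_acyclic : exB.IsAcyclicNet := by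
  refine ⟨by simp [exB], by simp [exB], by simp [exB], ?_, ⟨0, by simp [exB]⟩,
    acyclic_of_lt _ ?_, ?_⟩
  · intro x y h
    simp only [exB, Set.mem_insert_iff, Set.mem_singleton_iff] at *
    omega
  · intro x y h
    simp only [exB] at h
    omega
  · intro t ht
    rcases ht with rfl | rfl
    · exact ⟨⟨0, by simp [exB, pre]⟩, ⟨4, by simp [exB, post]⟩⟩
    · exact ⟨⟨1, by simp [exB, pre]⟩, ⟨4, by simp [exB, post]⟩⟩

theorem exA_wf : exA.WellFormedNet := by
  refine ⟨?_, wf_of_bdan _ ⟨exA_acyclic, ?_⟩⟩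
  · intro t ht
    refine ⟨[{t}], ⟨_, .cons ⟨⟨⟨⟨t, rfl⟩, by simpa using ht, ?_⟩, ?_⟩, rfl⟩ (.nil _)⟩,
      {t}, by simp, rfl⟩
    · rintro a rfl b rfl h
      exact absurd rfl h
    · intro p hp
      simp only [preSet, Set.mem_singleton_iff, Set.iUnion_iUnion_eq_left] at hp
      have h0 : p = 0 := by
        simp only [exA, pre, Set.mem_insert_iff, Set.mem_singleton_iff,
          Set.mem_setOf_eq] at hp ht
        omega
      subst h0
      refine ⟨by simp [exA], ?_⟩
      rw [Set.eq_empty_iff_forall_notMem]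
      intro x hx
      simp [exA, pre] at hx
  · intro p hp x hx y hy
    simp only [exA, pre, Set.mem_setOf_eq, Set.mem_insert_iff, Set.mem_singleton_iff] at *
    omega

theorem exA_not_occ : ¬ exA.IsOccurrenceNet := by
  intro h
  have := (h.2 0 (by simp [exA])).2 (show 1 ∈ exA.post 0 by simp [exA, post])
    (show 2 ∈ exA.post 0 by simp [exA, post])
  omega

theorem exB_not_wf : ¬ exB.WellFormedNet := by
  intro h
  have hs : [({2, 3} : Set ℕ)] ∈ exB.sseq := by
    refine ⟨_, .cons ⟨⟨⟨⟨2, by simp⟩, by simp [exB], ?_⟩, ?_⟩, rfl⟩ (.nil _)⟩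
    · intro t ht u hu htu
      rw [Set.eq_empty_iff_forall_notMem]
      rintro x ⟨h1, h2⟩
      simp only [exB, pre, Set.mem_setOf_eq, Set.mem_insert_iff, Set.mem_singleton_iff] at *
      omega
    · intro p hp
      obtain ⟨t, ht, htp⟩ := Set.mem_iUnion₂.mp hp
      refine ⟨?_, Set.eq_empty_iff_forall_notMem.mpr fun x hx => ?_⟩
      · simp only [exB, pre, Set.mem_setOf_eq, Set.mem_insert_iff, Set.mem_singleton_iff] at *
        omega
      · simp only [exB, pre, Set.mem_setOf_eq, Set.mem_insert_iff, Set.mem_singleton_iff] at *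
        omega
  have h1 := (h.2 _ hs).1 {2, 3} (by simp) 2 (by simp) 3 (by simp) (by omega)
  have h2 : 4 ∈ exB.post 2 ∩ exB.post 3 := by simp [exB, post]
  rw [h1] at h2
  exact h2

end Net

/-- `ON ⊂ WFAN ⊂ AN` (proper inclusions of the classes of nets). -/
theorem stmt10 :
    {N : Net ℕ | N.IsOccurrenceNet} ⊂ {N : Net ℕ | N.IsAcyclicNet ∧ N.WellFormedNet} ∧
    {N : Net ℕ | N.IsAcyclicNet ∧ N.WellFormedNet} ⊂ {N : Net ℕ | N.IsAcyclicNet} := by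
  refine ⟨⟨fun N hN => ⟨hN.1, Net.wf_of_occ N hN⟩, fun h => ?_⟩,
    ⟨fun N hN => hN.1, fun h => ?_⟩⟩
  · exact Net.exA_not_occ (h (show Net.exA ∈ _ from ⟨Net.exA_acyclic, Net.exA_wf⟩))
  · exact Net.exB_not_wf (h (show Net.exB ∈ _ from Net.exB_acyclic)).2
end

section
/- Let σ be a well-formed step sequence of an acyclic net AN. If σ is a maximal step sequence of AN, then the scenario induced by σ is a maximal scenario of AN. -/
namespace Net

variable {α : Type*}

/-- Invariant for a set `A` of executed transitions at marking `M`. -/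
def Inv (N : Net α) (A M : Set α) : Prop :=
  A ⊆ N.transitions ∧
  (∀ p, p ∈ M ↔ (p ∈ N.initMarking ∨ ∃ t ∈ A, N.flow t p) ∧ ¬ ∃ t ∈ A, N.flow p t) ∧
  (∀ p, (∃ t ∈ A, N.flow p t) → (p ∈ N.initMarking ∨ ∃ t ∈ A, N.flow t p)) ∧
  (∀ p, ∀ t ∈ A, ∀ u ∈ A, N.flow p t → N.flow p u → t = u) ∧
  (∀ p, ∀ t ∈ A, ∀ u ∈ A, N.flow t p → N.flow u p → t = u)

theorem Inv.step {N : Net α} {A M U M' : Set α} (hI : N.Inv A M) (hs : N.StepTrans M U M')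
    (hd : ∀ p, (∃ t ∈ A, N.flow t p) → ¬ ∃ t ∈ U, N.flow t p)
    (hU : ∀ t ∈ U, ∀ u ∈ U, t ≠ u → N.post t ∩ N.post u = ∅) : N.Inv (A ∪ U) M' := by
  obtain ⟨⟨⟨-, hUT, hpd⟩, hen⟩, rfl⟩ := hs
  obtain ⟨h1, h2, h3, h4, h5⟩ := hI
  have hen' : ∀ t ∈ U, ∀ p, N.flow p t → p ∈ M := by
    intro t ht p hp
    exact hen (by simp only [preSet, Set.mem_iUnion]; exact ⟨t, ht, hp⟩)
  have hpd' : ∀ p, ∀ t ∈ U, ∀ u ∈ U, N.flow p t → N.flow p u → t = u := by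
    intro p t ht u hu a b
    by_contra hne
    have : p ∈ N.pre t ∩ N.pre u := ⟨a, b⟩
    rw [hpd t ht u hu hne] at this
    exact this
  have hqd' : ∀ p, ∀ t ∈ U, ∀ u ∈ U, N.flow t p → N.flow u p → t = u := by
    intro p t ht u hu a b
    by_contra hne
    have : p ∈ N.post t ∩ N.post u := ⟨a, b⟩
    rw [hU t ht u hu hne] at this
    exact this
  have hini : ∀ p ∈ N.initMarking, ∀ t, ¬ N.flow t p := by
    intro p hp t ht
    have : t ∈ N.pre p := ht
    rw [hp.2] at this
    exact this
  refine ⟨Set.union_subset h1 hUT, ?_, ?_, ?_, ?_⟩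
  · intro p
    simp only [preSet, postSet, pre, post, Set.mem_diff, Set.mem_union, Set.mem_iUnion,
      Set.mem_setOf_eq, exists_prop]
    constructor
    · rintro ⟨hp | ⟨t, ht, hp⟩, hn⟩
      · have := (h2 p).1 hp
        grind
      · refine ⟨Or.inr ⟨t, Or.inr ht, hp⟩, ?_⟩
        rintro ⟨u, hu | hu, hpu⟩
        · rcases h3 p ⟨u, hu, hpu⟩ with h | h
          · exact hini p h t hp
          · exact hd p h ⟨t, ht, hp⟩
        · exact hn ⟨u, hu, hpu⟩
    · rintro ⟨hp, hn⟩
      have := h2 p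
      grind
  · rintro p ⟨t, ht | ht, hp⟩
    · have := h3 p ⟨t, ht, hp⟩
      grind
    · have := (h2 p).1 (hen' t ht p hp)
      grind
  · intro p t ht u hu a b
    have := h2 p
    rcases ht with ht | ht <;> rcases hu with hu | hu
    · exact h4 p t ht u hu a b
    · exact absurd ⟨t, ht, a⟩ ((h2 p).1 (hen' u hu p b)).2
    · exact absurd ⟨u, hu, b⟩ ((h2 p).1 (hen' t ht p a)).2
    · exact hpd' p t ht u hu a b
  · intro p t ht u hu a b
    rcases ht with ht | ht <;> rcases hu with hu | hu
    · exact h5 p t ht u hu a b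
    · exact absurd ⟨u, hu, b⟩ (hd p ⟨t, ht, a⟩)
    · exact absurd ⟨t, ht, a⟩ (hd p ⟨u, hu, b⟩)
    · exact hqd' p t ht u hu a b

theorem mem_postSet_iff (N : Net α) (X : Set α) (p : α) :
    p ∈ N.postSet X ↔ ∃ t ∈ X, N.flow t p := by
  simp [postSet, post]

theorem Inv.run {N : Net α} {M M' : Set α} {σ : List (Set α)} (hs : N.StepSeqFrom M σ M') :
    ∀ A, N.Inv A M → N.WellFormedSeq σ →
    (∀ U ∈ σ, ∀ p, (∃ t ∈ A, N.flow t p) → ¬ ∃ t ∈ U, N.flow t p) →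
    N.Inv (A ∪ transOf σ) M' := by
  induction hs with
  | nil M =>
    intro A hA _ _
    simpa [transOf] using hA
  | @cons M U M' σ M'' hst _ ih =>
    intro A hA hwf hd
    obtain ⟨hw1, hw2⟩ := hwf
    rw [List.pairwise_cons] at hw2
    have hE : A ∪ transOf (U :: σ) = (A ∪ U) ∪ transOf σ := by
      ext x; simp [transOf, or_assoc]
    rw [hE]
    refine ih (A ∪ U) (hA.step hst (hd U (by simp)) (hw1 U (by simp)))
      ⟨fun V hV => hw1 V (by simp [hV]), hw2.2⟩ ?_
    rintro V hV p ⟨t, ht | ht, hp⟩ hx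
    · exact hd V (by simp [hV]) p ⟨t, ht, hp⟩ hx
    · have : p ∈ N.postSet U ∩ N.postSet V :=
        ⟨(mem_postSet_iff ..).2 ⟨t, ht, hp⟩, (mem_postSet_iff ..).2 hx⟩
      rw [hw2.1 V hV] at this
      exact this

theorem StepSeqFrom.snoc {N : Net α} {M M' : Set α} {σ : List (Set α)}
    (hs : N.StepSeqFrom M σ M') {U M'' : Set α} (h : N.StepTrans M' U M'') :
    N.StepSeqFrom M (σ ++ [U]) M'' := by
  induction hs with
  | nil M => exact .cons h (.nil _)
  | cons a _ ih => exact .cons a (ih h)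

theorem exists_min {N : Net α} (h : N.IsAcyclicNet) (X : Set α) (hX : X.Nonempty)
    (hsub : X ⊆ N.places ∪ N.transitions) :
    ∃ x ∈ X, ∀ y ∈ X, ¬ Relation.TransGen N.flow y x := by
  obtain ⟨hP, hT, -, -, -, hac, -⟩ := h
  have hfin : Finite X := ((hP.union hT).subset hsub).to_subtype
  let r : X → X → Prop := fun a b => Relation.TransGen N.flow a.1 b.1
  have : IsTrans X r := ⟨fun a b c h1 h2 => Relation.TransGen.trans h1 h2⟩
  have : Std.Irrefl r := ⟨fun a => hac a.1⟩
  have wf : WellFounded r := Finite.wellFounded_of_trans_of_irrefl r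
  obtain ⟨x0, hx0⟩ := hX
  obtain ⟨m, -, hm⟩ := wf.has_min Set.univ ⟨⟨x0, hx0⟩, trivial⟩
  exact ⟨m.1, m.2, fun y hy hyx => hm ⟨y, hy⟩ trivial hyx⟩

theorem init_nonempty {N : Net α} (h : N.IsAcyclicNet) : N.initMarking.Nonempty := by
  obtain ⟨p, hp, hmin⟩ := exists_min h N.places h.2.2.2.2.1 Set.subset_union_left
  refine ⟨p, hp, ?_⟩
  obtain ⟨hP, hT, hdis, hfl, -, hac, hne⟩ := h
  ext t
  simp only [pre, Set.mem_setOf_eq, Set.mem_empty_iff_false, iff_false]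
  intro ht
  rcases hfl t p ht with ⟨a, b⟩ | ⟨a, b⟩
  · exact Set.disjoint_left.1 hdis hp b
  · obtain ⟨q, hq⟩ := (hne t a).1
    rcases hfl q t hq with ⟨c, -⟩ | ⟨-, d⟩
    · exact hmin q c (.tail (.single hq) ht)
    · exact Set.disjoint_left.1 hdis d a

end Net

open Net in
theorem Net.induced_scenario {α : Type*} {N : Net α} (h : N.IsAcyclicNet) {σ : List (Set α)}
    {M : Set α} (hI : N.Inv (transOf σ) M) : N.inducedScenario σ ∈ N.scenarios := by
  have hnon := init_nonempty h
  obtain ⟨h1, h2, h3, h4, h5⟩ := hI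
  obtain ⟨hP, hT, hdis, hfl, -, hac, hne⟩ := h
  have hdis' : ∀ x ∈ N.places, x ∉ N.transitions := fun _ hx => Set.disjoint_left.1 hdis hx
  have hmem : ∀ p, p ∈ N.initMarking ∪ N.postSet (transOf σ) ↔
      (p ∈ N.initMarking ∨ ∃ t ∈ transOf σ, N.flow t p) := by
    intro p; rw [Set.mem_union, mem_postSet_iff]
  have hpl : N.initMarking ∪ N.postSet (transOf σ) ⊆ N.places := by
    intro p hp
    rcases (hmem p).1 hp with hp | ⟨t, ht, hp⟩
    · exact hp.1
    · have := hfl t p hp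
      have := h1 ht
      grind
  have hpre : ∀ t ∈ transOf σ, (N.inducedScenario σ).pre t = N.pre t := by
    intro t ht
    ext p
    exact ⟨fun hx => hx.1, fun hx => ⟨hx, Or.inl ⟨(hmem p).2 (h3 p ⟨t, ht, hx⟩), ht⟩⟩⟩
  have hpost : ∀ t ∈ transOf σ, (N.inducedScenario σ).post t = N.post t := by
    intro t ht
    ext p
    exact ⟨fun hx => hx.1, fun hx => ⟨hx, Or.inr ⟨ht, (hmem p).2 (Or.inr ⟨t, ht, hx⟩)⟩⟩⟩
  have hnon' : (N.inducedScenario σ).places.Nonempty := hnon.mono Set.subset_union_left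
  refine ⟨⟨⟨hP.subset hpl, hT.subset h1, hdis.mono hpl h1, fun x y hxy => hxy.2, hnon', ?_, ?_⟩,
    ?_⟩, ⟨hnon', hpl, h1, fun x y => Iff.rfl, fun t ht => ⟨hpre t ht, hpost t ht⟩⟩, ?_⟩
  · intro x hx
    exact hac x (Relation.TransGen.mono (fun a b hab => hab.1) _ _ hx)
  · intro t ht
    rw [hpre t ht, hpost t ht]
    exact hne t (h1 ht)
  · intro p hp
    have hpp := hdis' p (hpl hp)
    refine ⟨?_, ?_⟩
    · rintro t ⟨a, ha⟩ u ⟨b, hb⟩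
      have h6 : t ∈ transOf σ := by
        rcases ha with ha | ha
        · exact absurd (h1 ha.2) hpp
        · exact ha.1
      have h7 : u ∈ transOf σ := by
        rcases hb with hb | hb
        · exact absurd (h1 hb.2) hpp
        · exact hb.1
      exact h5 p t h6 u h7 a b
    · rintro t ⟨a, ha⟩ u ⟨b, hb⟩
      have h6 : t ∈ transOf σ := by
        rcases ha with ha | ha
        · exact ha.2
        · exact absurd (h1 ha.1) hpp
      have h7 : u ∈ transOf σ := by
        rcases hb with hb | hb
        · exact hb.2
        · exact absurd (h1 hb.1) hpp
      exact h4 p t h6 u h7 a b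
  · ext p
    constructor
    · rintro ⟨hp, hp2⟩
      rcases (hmem p).1 hp with h6 | ⟨t, ht, htp⟩
      · exact h6
      · have : t ∈ (N.inducedScenario σ).pre p := ⟨htp, Or.inr ⟨ht, hp⟩⟩
        rw [hp2] at this
        exact this.elim
    · intro hp
      refine ⟨Or.inl hp, ?_⟩
      ext t
      simp only [Set.mem_empty_iff_false, iff_false]
      intro ht
      have h8 : t ∈ N.pre p := ht.1
      rw [hp.2] at h8
      exact h8

open Net in
/-- For a well-formed step sequence `σ` of an acyclic net `AN`, if `σ`
is a maximal step sequence of `AN`, then `scenario_AN(σ)` is a maximal scenario. -/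
theorem stmt13 {α : Type*} (N : Net α) (h : N.IsAcyclicNet) (σ : List (Set α))
    (hwf : N.WellFormedSeq σ) (hσ : σ ∈ N.maxsseq) :
    N.inducedScenario σ ∈ N.maxscenarios := by
  obtain ⟨⟨M, hM⟩, hmax⟩ := hσ
  have hI0 : N.Inv ∅ N.initMarking := by
    refine ⟨by simp, by simp, by simp, by simp, by simp⟩
  have hI : N.Inv (transOf σ) M := by
    have := Inv.run hM ∅ hI0 hwf (by simp)
    simpa using this
  refine ⟨induced_scenario h hI, ?_⟩
  rintro ⟨S, ⟨⟨hSac, hSoc⟩, ⟨hS1, hS2, hS3, hS4, hS5⟩, hSi⟩, hne, ⟨hR1, hR2, hR3, hR4, hR5⟩, hRi⟩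
  have hR2' : N.initMarking ∪ N.postSet (transOf σ) ⊆ S.places := hR2
  have hR3' : transOf σ ⊆ S.transitions := hR3
  -- places of `S` are initial or produced within `S`
  have hplace : ∀ p ∈ S.places, p ∈ N.initMarking ∨ ∃ t ∈ S.transitions, N.flow t p := by
    intro p hp
    by_cases he : S.pre p = ∅
    · left
      have : p ∈ S.initPlaces := ⟨hp, he⟩
      rw [hSi] at this
      exact this
    · right
      obtain ⟨t, ht⟩ := Set.nonempty_iff_ne_empty.2 he
      have h6 := (hS4 t p).1 ht
      refine ⟨t, ?_, h6.1⟩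
      rcases h6.2 with h7 | h7
      · exact absurd h7.2 (Set.disjoint_left.1 hSac.2.2.1 hp)
      · exact h7.1
  have hTeq : S.transitions = transOf σ := by
    refine Set.Subset.antisymm ?_ hR3'
    by_contra hns
    obtain ⟨x, hxS, hxn⟩ := Set.not_subset.1 hns
    obtain ⟨t, ⟨htS, htn⟩, hmin⟩ := exists_min h (S.transitions \ transOf σ) ⟨x, hxS, hxn⟩
      (fun y hy => Or.inr (hS3 hy.1))
    apply hmax
    refine ⟨{t}, _, hM.snoc ⟨⟨⟨⟨t, rfl⟩, ?_, ?_⟩, ?_⟩, rfl⟩⟩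
    · rintro _ rfl
      exact hS3 htS
    · rintro _ rfl _ rfl hh
      exact absurd rfl hh
    · intro p hp
      have hp' : p ∈ N.pre t := by simpa [preSet] using hp
      have hSp : S.flow p t := by
        have : p ∈ S.pre t := by rw [(hS5 t htS).1]; exact hp'
        exact this
      have hpS : p ∈ S.places := by
        rcases ((hS4 p t).1 hSp).2 with h7 | h7
        · exact h7.1
        · exact absurd htS (Set.disjoint_left.1 hSac.2.2.1 h7.2)
      refine (hI.2.1 p).2 ⟨?_, ?_⟩
      · rcases hplace p hpS with h7 | ⟨u, hu, hup⟩
        · exact Or.inl h7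
        · refine Or.inr ⟨u, ?_, hup⟩
          by_contra hun
          exact hmin u ⟨hu, hun⟩ (.tail (.single hup) hp')
      · rintro ⟨u, hu, hpu⟩
        have hSu : S.flow p u := (hS4 p u).2 ⟨hpu, Or.inl ⟨hpS, hR3' hu⟩⟩
        have : t = u := (hSoc p hpS).2 hSp hSu
        exact htn (this ▸ hu)
  have hPeq : S.places = N.initMarking ∪ N.postSet (transOf σ) := by
    refine Set.Subset.antisymm ?_ hR2'
    intro p hp
    rw [Set.mem_union, mem_postSet_iff, ← hTeq]
    exact hplace p hp
  apply hne
  have hF : S.flow = (N.inducedScenario σ).flow := by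
    funext x y
    apply propext
    rw [hS4 x y, hPeq, hTeq]
    exact Iff.rfl
  cases S
  simp only at hTeq hPeq hF
  subst hTeq hPeq hF
  rfl
end
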